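/- arXiv:2105.12550 — 4 statements merged into one kernel-verified Lean document; each statement's English description precedes it below -/
import Mathlib

section
/- For every integer n ≥ 1, the Krull dimension of the ring ℂ[x_{ij}, y_{ij} (1 ≤ i,j ≤ n), s, t] / I equals n² + n, where X = (x_{ij}) and Y = (y_{ij}) are the generic n×n matrices and I is the ideal generated by the n² entries of XY − YX together with the two elements s·det(X) − 1 and t·det(Y) − 1. (This ring is the coordinate ring of the commuting variety C(GL_n) = {(a,b) ∈ GL_n × GL_n : ab = ba}, so this says dim C(GL_n) = n² + n, i.e. the commuting probability p(GL_n) = dim C(GL_n)/(2·dim GL_n) equals (n+1)/(2n).) -/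
open MvPolynomial

/-- The generic matrix `X` of size `n × n`, with entries the variables `x_{ij}`. -/
noncomputable def genX (n : ℕ) :
    Matrix (Fin n) (Fin n)
      (MvPolynomial ((Fin n × Fin n) ⊕ (Fin n × Fin n) ⊕ Fin 2) ℂ) :=
  fun i j => X (Sum.inl (i, j))

/-- The generic matrix `Y` of size `n × n`, with entries the variables `y_{ij}`. -/
noncomputable def genY (n : ℕ) :
    Matrix (Fin n) (Fin n)
      (MvPolynomial ((Fin n × Fin n) ⊕ (Fin n × Fin n) ⊕ Fin 2) ℂ) :=
  fun i j => X (Sum.inr (Sum.inl (i, j)))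

/-- The auxiliary variable `s`. -/
noncomputable def genS (n : ℕ) :
    MvPolynomial ((Fin n × Fin n) ⊕ (Fin n × Fin n) ⊕ Fin 2) ℂ :=
  X (Sum.inr (Sum.inr 0))

/-- The auxiliary variable `t`. -/
noncomputable def genT (n : ℕ) :
    MvPolynomial ((Fin n × Fin n) ⊕ (Fin n × Fin n) ⊕ Fin 2) ℂ :=
  X (Sum.inr (Sum.inr 1))

/-!
The dimension is the largest number of parameters on which a commuting pair `(A, B)` of invertible
matrices over an extension field can depend. Let `r` be the rank of `X ↦ A * X - X * A`. The
rational canonical form `J` of `A` has at most `n` parameters. The matrices `g` with `A * g = g * J`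
form a linear space of codimension `r`, on which `n² - r` coordinates are free; giving these generic
values in the base field yields an invertible `g` with at most `r` parameters, so `A = g * J * g⁻¹`
has at most `n + r`. Finally `B` lies in the centralizer of `A`, a space of dimension `n² - r`
defined over the field generated by the entries of `A`, so the pair has at most `n² + n` parameters.

Conversely, if `A` is a generic matrix then the vectors `A ^ l *ᵥ 1` with `l < n` form a basis, so
some polynomial in `A` maps the all-ones vector to any prescribed vector. The entries of `A` and the
entries of `B *ᵥ 1` are therefore algebraically independent on the commuting variety.
-/

open scoped Matrix Kronecker

section KrullDimension

theorem ringKrullDim_le_of_isIntegral (R S : Type*) [CommRing R] [CommRing S] [Algebra R S]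
    [Algebra.IsIntegral R S] : ringKrullDim S ≤ ringKrullDim R :=
  Order.krullDim_le_of_strictMono (PrimeSpectrum.comap (algebraMap R S)) fun I J hIJ ↦
    Ideal.IsIntegral.comap_lt_comap (I := I.asIdeal) (J := J.asIdeal) hIJ

theorem ringKrullDim_eq_of_isIntegral (R S : Type*) [CommRing R] [CommRing S] [Algebra R S]
    [Algebra.IsIntegral R S] [FaithfulSMul R S] : ringKrullDim S = ringKrullDim R := by
  refine (ringKrullDim_le_of_isIntegral R S).antisymm (iSup_le fun chain ↦ ?_)
  obtain ⟨Q, hQprime, hQover⟩ :=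
    (inferInstance : Nonempty (Ideal.primesOver chain.head.asIdeal S))
  obtain ⟨lift, hlength, -⟩ := Ideal.exists_ltSeries_of_hasGoingUp chain Q
  exact hlength ▸ Order.LTSeries.length_le_krullDim lift

theorem ringKrullDim_le_of_forall_isPrime {R : Type*} [CommRing R] {N : WithBot ℕ∞}
    (h : ∀ P : Ideal R, P.IsPrime → ringKrullDim (R ⧸ P) ≤ N) : ringKrullDim R ≤ N := by
  refine iSup_le fun chain ↦ le_trans ?_ (h chain.head.asIdeal chain.head.isPrime)
  rw [ringKrullDim_quotient]
  let restricted : LTSeries (PrimeSpectrum.zeroLocus (chain.head.asIdeal : Set R)) :=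
    { length := chain.length
      toFun := fun i ↦ ⟨chain i, chain.head_le i⟩
      step := fun i ↦ chain.step i }
  exact Order.LTSeries.length_le_krullDim restricted

theorem ringKrullDim_eq_trdeg (k R : Type*) [Field k] [CommRing R] [IsDomain R] [Algebra k R]
    [Algebra.FiniteType k R] :
    ringKrullDim R = (Cardinal.toENat (Algebra.trdeg k R) : WithBot ℕ∞) := by
  obtain ⟨d, g, hg, hintegral⟩ := exists_integral_inj_algHom_of_fg k R
  algebraize [g.toRingHom]
  have : Algebra.IsIntegral (MvPolynomial (Fin d) k) R := ⟨hintegral⟩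
  have : FaithfulSMul (MvPolynomial (Fin d) k) R :=
    (faithfulSMul_iff_algebraMap_injective _ _).mpr hg
  have htrdeg : Algebra.trdeg k R = d := by
    have hadd := lift_trdeg_add_eq k (MvPolynomial (Fin d) k) R
    rw [trdeg_eq_zero (A := R), MvPolynomial.trdeg_of_isDomain] at hadd
    simpa using hadd.symm
  rw [ringKrullDim_eq_of_isIntegral (MvPolynomial (Fin d) k) R,
    MvPolynomial.ringKrullDim_of_isNoetherianRing, ringKrullDim_eq_zero_of_field, htrdeg]
  simp

theorem card_le_ringKrullDim {k R D ι : Type*} [Field k] [CommRing R] [Algebra k R]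
    [Algebra.FiniteType k R] [CommRing D] [IsDomain D] [Algebra k D] [Fintype ι] (φ : R →ₐ[k] D)
    {x : ι → R} (hx : AlgebraicIndependent k (φ ∘ x)) :
    (Fintype.card ι : WithBot ℕ∞) ≤ ringKrullDim R := by
  have hfinite : Algebra.FiniteType k φ.range :=
    .of_surjective φ.rangeRestrict φ.rangeRestrict_surjective
  have hrange : AlgebraicIndependent k (φ.rangeRestrict ∘ x) := .of_comp φ.range.val hx
  have hcard : (Fintype.card ι : Cardinal) ≤ Algebra.trdeg k φ.range := by
    simpa using hrange.lift_cardinalMk_le_trdeg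
  calc (Fintype.card ι : WithBot ℕ∞)
      ≤ (Cardinal.toENat (Algebra.trdeg k φ.range) : WithBot ℕ∞) := by
        exact_mod_cast Cardinal.natCast_le_toENat.mpr hcard
    _ = ringKrullDim φ.range := (ringKrullDim_eq_trdeg k φ.range).symm
    _ ≤ ringKrullDim R :=
      ringKrullDim_le_of_surjective φ.rangeRestrict.toRingHom φ.rangeRestrict_surjective

open IntermediateField.algebraAdjoinAdjoin in
theorem trdeg_adjoin_le {k K : Type*} [Field k] [Field K] [Algebra k K] (S : Set K) :
    Algebra.trdeg k (IntermediateField.adjoin k S) ≤ Cardinal.mk S := by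
  have halg : Algebra.IsAlgebraic (Algebra.adjoin k S) (IntermediateField.adjoin k S) :=
    IsLocalization.isAlgebraic _ (nonZeroDivisors (Algebra.adjoin k S))
  have hadd := trdeg_add_eq k (Algebra.adjoin k S) (A := IntermediateField.adjoin k S)
  rw [trdeg_eq_zero (R := Algebra.adjoin k S), add_zero, Algebra.adjoin_eq_range] at hadd
  have hsurj := lift_trdeg_le_of_surjective _
    (aeval ((↑) : S → K) : MvPolynomial S k →ₐ[k] K).rangeRestrict_surjective
  rw [hadd, MvPolynomial.trdeg_of_isDomain] at hsurj
  simpa using hsurj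

theorem ringKrullDim_le_card_of_forall_mem_adjoin {k k₀ R K : Type*} [Field k] [Field k₀]
    [Algebra k k₀] [Algebra.IsAlgebraic k k₀] [CommRing R] [IsDomain R] [Algebra k R]
    [Algebra.FiniteType k R] [Field K] [Algebra k K] [Algebra k₀ K] [IsScalarTower k k₀ K]
    {φ : R →ₐ[k] K} (hφ : Function.Injective φ) {S : Finset K}
    (hmem : ∀ r, φ r ∈ IntermediateField.adjoin k₀ (S : Set K)) : ringKrullDim R ≤ S.card := by
  let ψ : R →ₐ[k] IntermediateField.adjoin k₀ (S : Set K) :=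
    φ.codRestrict ((IntermediateField.adjoin k₀ (S : Set K)).toSubalgebra.restrictScalars k) hmem
  have hψ : Function.Injective ψ := (φ.injective_codRestrict _ hmem).mpr hφ
  have htrdeg := lift_trdeg_le_of_injective ψ hψ
  have hadd := lift_trdeg_add_eq k k₀ (IntermediateField.adjoin k₀ (S : Set K))
  have hS : Algebra.trdeg k₀ (IntermediateField.adjoin k₀ (S : Set K)) ≤ S.card := by
    simpa using trdeg_adjoin_le (k := k₀) (S : Set K)
  rw [trdeg_eq_zero (R := k) (A := k₀), Cardinal.lift_zero, zero_add, Cardinal.lift_inj] at hadd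
  rw [← hadd] at htrdeg
  have hcard : Algebra.trdeg k R ≤ S.card := by
    simpa using htrdeg.trans (Cardinal.lift_le.mpr hS)
  rw [ringKrullDim_eq_trdeg k]
  exact_mod_cast Cardinal.toENat_le_natCast.mpr hcard

end KrullDimension

section RationalCanonicalForm

open Polynomial in
theorem exists_basis_repr_X_smul_mem {K : Type*} [Field K] {q : K[X]} (hq : q ≠ 0) :
    ∃ (d : ℕ) (b : Module.Basis (Fin d) K (K[X] ⧸ Submodule.span K[X] {q})) (c : Fin d → K),
      ∀ i j, b.repr ((X : K[X]) • b j) i ∈ ({0, 1, c i} : Set K) := by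
  let pb := AdjoinRoot.powerBasis hq
  refine ⟨pb.dim, pb.basis, fun i ↦ -pb.minpolyGen.coeff i, fun i j ↦ ?_⟩
  have hcompanion := congrFun₂ pb.leftMulMatrix i j
  rw [Algebra.leftMulMatrix_apply, LinearMap.toMatrix_apply] at hcompanion
  change pb.basis.repr (AdjoinRoot.root q * pb.basis j) i ∈ _
  rw [show AdjoinRoot.root q * pb.basis j = Algebra.lmul K (AdjoinRoot q) pb.gen (pb.basis j) by
    simp [pb], hcompanion, Matrix.of_apply]
  split_ifs <;> simp

open Polynomial in
theorem exists_basis_repr_mem.{u, v} {K : Type u} {V : Type v} [Field K] [AddCommGroup V]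
    [Module K V] [FiniteDimensional K V] (φ : Module.End K V) :
    ∃ (ι : Type u) (_ : Fintype ι) (b : Module.Basis ι K V) (c : ι → K),
      ∀ i j, b.repr (φ (b j)) i ∈ ({0, 1, c i} : Set K) := by
  classical
  obtain ⟨ι, _, p, hp, e, ⟨iso⟩⟩ := Module.equiv_directSum_of_isTorsion
    (Module.AEval.isTorsion_of_finiteDimensional K V φ)
  choose d b c hb using fun i ↦ exists_basis_repr_X_smul_mem (pow_ne_zero (e i) (hp i).ne_zero)
  let F : V ≃ₗ[K] Π i, K[X] ⧸ Submodule.span K[X] {p i ^ e i} :=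
    Module.AEval'.of φ ≪≫ₗ
      (iso ≪≫ₗ DirectSum.linearEquivFunOnFintype K[X] ι _).restrictScalars K
  have hF (v : V) : F (φ v) = (X : K[X]) • F v := by
    simp only [F, LinearEquiv.trans_apply, LinearEquiv.restrictScalars_apply]
    rw [← map_smul, ← map_smul, Module.AEval'.X_smul_of]
  refine ⟨Σ i, Fin (d i), inferInstance, (Pi.basis b).map F.symm, fun s ↦ c s.1 s.2, ?_⟩
  rintro ⟨i, s⟩ ⟨j, t⟩
  rw [Module.Basis.map_repr, Module.Basis.map_apply, LinearEquiv.trans_apply,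
    LinearEquiv.symm_symm, hF, F.apply_symm_apply, Pi.basis_apply, Pi.basis_repr]
  obtain rfl | hij := eq_or_ne i j
  · simpa using hb i s t
  · simp [hij]

theorem exists_isUnit_mul_eq_mul {n K : Type*} [Fintype n] [DecidableEq n] [Field K]
    (A : Matrix n n K) :
    ∃ (g J : Matrix n n K) (c : n → K), IsUnit g ∧ A * g = g * J ∧
      ∀ i j, J i j ∈ ({0, 1, c i} : Set K) := by
  obtain ⟨ι, _, b, c, hb⟩ := exists_basis_repr_mem (Matrix.toLin' A)
  let e : ι ≃ n := b.indexEquiv (Pi.basisFun K n)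
  refine ⟨(Pi.basisFun K n).toMatrix (b.reindex e),
    LinearMap.toMatrix (b.reindex e) (b.reindex e) (Matrix.toLin' A), c ∘ e.symm, ?_, ?_, ?_⟩
  · have := Module.Basis.invertibleToMatrix (Pi.basisFun K n) (b.reindex e)
    exact isUnit_of_invertible _
  · rw [basis_toMatrix_mul_linearMap_toMatrix,
      ← linearMap_toMatrix_mul_basis_toMatrix _ (Pi.basisFun K n) (Pi.basisFun K n),
      LinearMap.toMatrix_eq_toMatrix', LinearMap.toMatrix'_toLin']
  · intro i j
    simpa [LinearMap.toMatrix_apply] using hb (e.symm i) (e.symm j)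

end RationalCanonicalForm

section LinearSystems

theorem exists_finset_bijective_funLeft_domRestrict {N K : Type*} [Finite N] [Field K]
    (W : Submodule K (N → K)) :
    ∃ s : Finset N, Function.Bijective
      ((LinearMap.funLeft K K ((↑) : s → N)).domRestrict W) := by
  classical
  have := Fintype.ofFinite N
  let coord (i : N) : Module.Dual K W := (LinearMap.proj i).domRestrict W
  obtain ⟨b, -, -, hspan, hindep⟩ :=
    exists_linearIndepOn_extension (linearIndepOn_empty K coord) (Set.subset_univ _)
  let restrict := (LinearMap.funLeft K K ((↑) : b.toFinset → N)).domRestrict W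
  have hinj : Function.Injective restrict := by
    refine (injective_iff_map_eq_zero _).mpr fun w hw ↦ Subtype.ext (funext fun i ↦ ?_)
    have hker : Submodule.span K (coord '' b) ≤ LinearMap.ker (Module.Dual.eval K W w) := by
      refine Submodule.span_le.mpr ?_
      rintro _ ⟨j, hj, rfl⟩
      exact congrFun hw ⟨j, by simpa using hj⟩
    exact hker (hspan ⟨i, Set.mem_univ i, rfl⟩)
  have hcard : b.toFinset.card ≤ Module.finrank K W := by
    rw [← Subspace.dual_finrank_eq, Set.toFinset_card]
    exact hindep.linearIndependent.fintype_card_le_finrank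
  refine ⟨b.toFinset, hinj, ?_⟩
  refine (LinearMap.injective_iff_surjective_of_finrank_eq_finrank ?_).mp hinj
  exact (LinearMap.finrank_le_finrank_of_injective hinj).antisymm (by simpa using hcard)

theorem exists_eval_algebraMap_ne_zero {κ N k K : Type*} [Finite κ] [Field k]
    [Infinite k] [Field K] [Algebra k K] (f : (κ → K) →ₗ[K] N → K) {p : MvPolynomial N K}
    {u₀ : κ → K} (hp : eval (f u₀) p ≠ 0) :
    ∃ u : κ → k, eval (f (algebraMap k K ∘ u)) p ≠ 0 := by
  classical
  have := Fintype.ofFinite κ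
  by_contra! hzero
  let q : MvPolynomial κ K := bind₁ (LinearMap.toMatrix' f).toMvPolynomial p
  have heval (u : κ → K) : eval u q = eval (f u) p := by
    change aeval u (bind₁ _ p) = aeval (f u) p
    rw [aeval_bind₁]
    congr! 2
    ext i
    rw [aeval_eq_eval, Matrix.toMvPolynomial_eval_eq_apply, LinearMap.toMatrix'_mulVec]
  have hq : q = 0 := by
    refine funext_set (fun _ ↦ Set.range (algebraMap k K))
      (fun _ ↦ Set.infinite_range_of_injective (algebraMap k K).injective) fun x hx ↦ ?_
    choose u hu using fun i ↦ hx i (Set.mem_univ i)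
    obtain rfl : algebraMap k K ∘ u = x := funext hu
    rw [heval, hzero, map_zero]
  exact hp (by rw [← heval, hq, map_zero])

theorem exists_mulVec_eq_zero_eval_ne_zero_mem_adjoin {m N K : Type*} (k : Type*) [Finite m]
    [Fintype N] [Field k] [Infinite k] [Field K] [Algebra k K] (M : Matrix m N K)
    {p : MvPolynomial N K} {v₀ : N → K} (hv₀ : M *ᵥ v₀ = 0) (hp : eval v₀ p ≠ 0) :
    ∃ (v : N → K) (S : Finset K), M *ᵥ v = 0 ∧ eval v p ≠ 0 ∧ S.card ≤ M.rank ∧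
      ∀ i, v i ∈ IntermediateField.adjoin k (S : Set K) := by
  classical
  let W := LinearMap.ker M.mulVecLin
  obtain ⟨s, hs⟩ := exists_finset_bijective_funLeft_domRestrict W
  let e : W ≃ₗ[K] (s → K) := LinearEquiv.ofBijective _ hs
  obtain ⟨u, hu⟩ := exists_eval_algebraMap_ne_zero (k := k) (W.subtype ∘ₗ e.symm.toLinearMap)
    (p := p) (u₀ := e ⟨v₀, hv₀⟩) (by simpa using hp)
  -- Free coordinates in `k` leave at most `M.rank` coordinates outside `k`.
  set v : W := e.symm (algebraMap k K ∘ u)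
  have hfree (i : s) : (v : N → K) i = algebraMap k K (u i) :=
    congrFun (e.apply_symm_apply (algebraMap k K ∘ u)) i
  refine ⟨v, sᶜ.image (v : N → K), v.2, hu, ?_, fun i ↦ ?_⟩
  · have hrank : M.rank + s.card = Fintype.card N := by
      simpa [e.finrank_eq, W, Matrix.rank] using M.mulVecLin.finrank_range_add_finrank_ker
    have := Finset.card_image_le (s := sᶜ) (f := (v : N → K))
    have := s.card_compl_add_card
    omega
  · by_cases hi : i ∈ s
    · exact hfree ⟨i, hi⟩ ▸ IntermediateField.algebraMap_mem _ (u ⟨i, hi⟩)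
    · exact IntermediateField.subset_adjoin _ _ (by simpa using ⟨i, hi, rfl⟩)

theorem eq_of_map_mulVec_eq {m κ E K : Type*} [Fintype κ] [Field E] [Field K] [Algebra E K]
    {e : κ → K} (he : LinearIndependent E e) {X Y : Matrix m κ E}
    (h : X.map (algebraMap E K) *ᵥ e = Y.map (algebraMap E K) *ᵥ e) : X = Y := by
  refine funext fun i ↦ he.fintypeLinearCombination_injective ?_
  simpa [Matrix.mulVec, dotProduct, Fintype.linearCombination_apply, Algebra.smul_def]
    using congrFun h i

theorem exists_finset_span_of_mulVec_eq_zero {m N E K : Type*} [Finite m] [Fintype N] [Field E]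
    [Field K] [Algebra E K] (M : Matrix m N E) {v : N → K}
    (hv : M.map (algebraMap E K) *ᵥ v = 0) :
    ∃ S : Finset K, S.card + (M.map (algebraMap E K)).rank ≤ Fintype.card N ∧
      ∀ i, v i ∈ Submodule.span E (S : Set K) := by
  classical
  obtain ⟨κ, a, ha, hspan, hindep⟩ := exists_linearIndependent' E v
  have : Fintype κ := Fintype.ofInjective a ha
  have hmem (i : N) : v i ∈ Submodule.span E (Set.range (v ∘ a)) :=
    hspan ▸ Submodule.subset_span ⟨i, rfl⟩
  choose C hC using fun i ↦ (Submodule.mem_span_range_iff_exists_fun E).mp (hmem i)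
  -- The columns of `C'` are linearly independent solutions over `E`, one per element of the basis.
  let C' : Matrix N κ E := Matrix.of C
  have hCv : C'.map (algebraMap E K) *ᵥ (v ∘ a) = v := by
    ext i
    simpa [Matrix.mulVec, dotProduct, Algebra.smul_def, C'] using hC i
  have hsub : C'.submatrix a id = 1 := by
    refine eq_of_map_mulVec_eq hindep ?_
    rw [Matrix.map_one _ (map_zero _) (map_one _), Matrix.one_mulVec]
    exact funext fun j ↦ congrFun hCv (a j)
  have hMC : M * C' = 0 := by
    refine eq_of_map_mulVec_eq hindep ?_
    rw [Matrix.map_mul, ← Matrix.mulVec_mulVec, hCv, hv, Matrix.map_zero _ (map_zero _),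
      Matrix.zero_mulVec]
  have hrank : Fintype.card κ ≤ (C'.map (algebraMap E K)).rank := by
    have := (C'.map (algebraMap E K)).rank_submatrix_le a id
    rwa [Matrix.submatrix_map, hsub, Matrix.map_one _ (map_zero _) (map_one _), Matrix.rank_one]
      at this
  have hadd : (M.map (algebraMap E K)).rank + (C'.map (algebraMap E K)).rank ≤ Fintype.card N :=
    Matrix.rank_add_rank_le_card_of_mul_eq_zero <| by
      rw [← Matrix.map_mul, hMC, Matrix.map_zero _ (map_zero _)]
  have hcard : (Finset.univ.image (v ∘ a)).card ≤ Fintype.card κ := Finset.card_image_le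
  refine ⟨Finset.univ.image (v ∘ a), by omega, fun i ↦ ?_⟩
  rw [Finset.coe_image, Finset.coe_univ, Set.image_univ]
  exact hmem i

end LinearSystems

section SylvesterMatrix

variable {n R : Type*} [DecidableEq n] [CommRing R]

/-- The matrix of the linear map `X ↦ P * X - X * Q` on square matrices, which are identified with
vectors by stacking their columns as in `Matrix.vec`. -/
def sylvesterMatrix (P Q : Matrix n n R) : Matrix (n × n) (n × n) R :=
  1 ⊗ₖ P - Qᵀ ⊗ₖ 1

theorem sylvesterMatrix_map {S : Type*} [CommRing S] (f : R →+* S) (P Q : Matrix n n R) :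
    (sylvesterMatrix P Q).map f = sylvesterMatrix (P.map f) (Q.map f) := by
  ext ⟨i, j⟩ ⟨i', j'⟩
  simp [sylvesterMatrix, Matrix.one_apply, apply_ite f]

variable [Fintype n]

theorem sylvesterMatrix_mulVec_vec (P Q X : Matrix n n R) :
    sylvesterMatrix P Q *ᵥ X.vec = (P * X - X * Q).vec := by
  simp [sylvesterMatrix, Matrix.sub_mulVec, Matrix.kronecker_mulVec_vec]

theorem sylvesterMatrix_mulVec_vec_eq_zero_iff {P Q X : Matrix n n R} :
    sylvesterMatrix P Q *ᵥ X.vec = 0 ↔ P * X = X * Q := by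
  rw [sylvesterMatrix_mulVec_vec, Matrix.vec_eq_zero_iff, sub_eq_zero]

end SylvesterMatrix

section CommutingMatrices

variable {n K : Type*} [Fintype n] [DecidableEq n] [Field K]

theorem rank_sylvesterMatrix_of_mul_eq_mul {A J g : Matrix n n K} (hg : IsUnit g)
    (h : A * g = g * J) : (sylvesterMatrix A J).rank = (sylvesterMatrix A A).rank := by
  have hconj : sylvesterMatrix A J * (gᵀ ⊗ₖ 1) = (gᵀ ⊗ₖ 1) * sylvesterMatrix A A := by
    simp only [sylvesterMatrix, sub_mul, mul_sub, ← Matrix.mul_kronecker_mul, one_mul, mul_one,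
      ← Matrix.transpose_mul, h]
  have hunit : IsUnit (gᵀ ⊗ₖ (1 : Matrix n n K)).det := by
    rw [Matrix.det_kronecker, Matrix.det_one, one_pow, mul_one, Matrix.det_transpose]
    exact ((Matrix.isUnit_iff_isUnit_det g).mp hg).pow _
  rw [← Matrix.rank_mul_eq_left_of_isUnit_det _ (sylvesterMatrix A J) hunit, hconj,
    Matrix.rank_mul_eq_right_of_isUnit_det _ _ hunit]

theorem forall_mem_of_mul_eq_mul {k : Type*} [Field k] [Algebra k K] {L : IntermediateField k K}
    {A g J : Matrix n n K} (hg : IsUnit g) (hgL : ∀ i j, g i j ∈ L) (hJL : ∀ i j, J i j ∈ L)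
    (h : A * g = g * J) (i j : n) : A i j ∈ L := by
  let g' : Matrix n n L := .of fun i j ↦ ⟨g i j, hgL i j⟩
  let J' : Matrix n n L := .of fun i j ↦ ⟨J i j, hJL i j⟩
  let incl : Matrix n n L →+* Matrix n n K := (algebraMap L K).mapMatrix
  have hdet : IsUnit g'.det := by
    rw [isUnit_iff_ne_zero, ← map_ne_zero (algebraMap L K), RingHom.map_det]
    exact ((Matrix.isUnit_iff_isUnit_det g).mp hg).ne_zero
  have hinv : g * incl g'⁻¹ = 1 := by
    change incl g' * incl g'⁻¹ = 1
    rw [← map_mul, Matrix.mul_nonsing_inv _ hdet, map_one]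
  have hA : A = incl (g' * J' * g'⁻¹) := by
    rw [map_mul, map_mul]
    change A = g * J * incl g'⁻¹
    rw [← h, mul_assoc, hinv, mul_one]
  rw [hA]
  exact ((g' * J' * g'⁻¹) i j).2

theorem exists_isUnit_mul_eq_mul_mem_adjoin (k : Type*) [Field k] [Infinite k] [Algebra k K]
    {A J g₀ : Matrix n n K} (hg₀ : IsUnit g₀) (h : A * g₀ = g₀ * J) :
    ∃ (g : Matrix n n K) (S : Finset K), IsUnit g ∧ A * g = g * J ∧
      S.card ≤ (sylvesterMatrix A A).rank ∧
      ∀ i j, g i j ∈ IntermediateField.adjoin k (S : Set K) := by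
  have hdet (g : Matrix n n K) : eval g.vec (Matrix.mvPolynomialX n n K).det = g.det := by
    rw [Matrix.eval_det_mvPolynomialX, ← g.det_transpose]
    rfl
  obtain ⟨v, S, hv, hp, hS, hmem⟩ := exists_mulVec_eq_zero_eval_ne_zero_mem_adjoin k
    (sylvesterMatrix A J) (p := (Matrix.mvPolynomialX n n K).det)
    (sylvesterMatrix_mulVec_vec_eq_zero_iff.mpr h)
    (by rw [hdet]; exact ((Matrix.isUnit_iff_isUnit_det g₀).mp hg₀).ne_zero)
  obtain ⟨g, rfl⟩ : ∃ g : Matrix n n K, g.vec = v := ⟨.of fun i j ↦ v (j, i), rfl⟩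
  rw [hdet] at hp
  exact ⟨g, S, (Matrix.isUnit_iff_isUnit_det g).mpr hp.isUnit,
    sylvesterMatrix_mulVec_vec_eq_zero_iff.mp hv,
    rank_sylvesterMatrix_of_mul_eq_mul hg₀ h ▸ hS, fun i j ↦ hmem (j, i)⟩

theorem exists_finset_matrix_mem_adjoin (k : Type*) [Field k] [Infinite k] [Algebra k K]
    (A : Matrix n n K) :
    ∃ S : Finset K, S.card ≤ Fintype.card n + (sylvesterMatrix A A).rank ∧
      ∀ i j, A i j ∈ IntermediateField.adjoin k (S : Set K) := by
  classical
  obtain ⟨g₀, J, c, hg₀, hconj₀, hJ⟩ := exists_isUnit_mul_eq_mul A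
  obtain ⟨g, S, hg, hconj, hS, hmem⟩ := exists_isUnit_mul_eq_mul_mem_adjoin k hg₀ hconj₀
  let L := IntermediateField.adjoin k ((Finset.univ.image c ∪ S : Finset K) : Set K)
  have hSL (i j) : g i j ∈ L :=
    IntermediateField.adjoin.mono k _ _ (by simp) (hmem i j)
  have hJL (i j) : J i j ∈ L := by
    obtain h | h | h := hJ i j
    · exact h ▸ zero_mem L
    · exact h ▸ one_mem L
    · exact h ▸ IntermediateField.subset_adjoin k _ (by simp)
  refine ⟨_, (Finset.card_union_le _ _).trans ?_, forall_mem_of_mul_eq_mul hg hSL hJL hconj⟩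
  exact Nat.add_le_add Finset.card_image_le hS

theorem exists_finset_mem_adjoin_of_mul_comm {k : Type*} [Field k] [Algebra k K]
    {E : IntermediateField k K} {A B : Matrix n n K} (hA : ∀ i j, A i j ∈ E) (h : A * B = B * A) :
    ∃ S : Finset K, S.card + (sylvesterMatrix A A).rank ≤ Fintype.card n ^ 2 ∧
      ∀ i j, B i j ∈ IntermediateField.adjoin E (S : Set K) := by
  let A' : Matrix n n E := .of fun i j ↦ ⟨A i j, hA i j⟩
  have hmap : (sylvesterMatrix A' A').map (algebraMap E K) = sylvesterMatrix A A :=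
    sylvesterMatrix_map (algebraMap E K) A' A'
  obtain ⟨S, hS, hmem⟩ := exists_finset_span_of_mulVec_eq_zero (sylvesterMatrix A' A')
    (v := B.vec) (by rw [hmap]; exact sylvesterMatrix_mulVec_vec_eq_zero_iff.mpr h)
  refine ⟨S, by rwa [hmap, Fintype.card_prod, ← sq] at hS, fun i j ↦ ?_⟩
  exact IntermediateField.algebra_adjoin_le_adjoin E _ (Algebra.span_le_adjoin E _ (hmem (j, i)))

end CommutingMatrices

theorem exists_finset_commuting_matrices_mem_adjoin {n K : Type*} [Fintype n] [Field K] (k : Type*)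
    [Field k] [Infinite k] [Algebra k K] {A B : Matrix n n K} (h : A * B = B * A) :
    ∃ S : Finset K, S.card ≤ Fintype.card n ^ 2 + Fintype.card n ∧
      (∀ i j, A i j ∈ IntermediateField.adjoin k (S : Set K)) ∧
      ∀ i j, B i j ∈ IntermediateField.adjoin k (S : Set K) := by
  classical
  obtain ⟨S, hS, hA⟩ := exists_finset_matrix_mem_adjoin k A
  obtain ⟨T, hT, hB⟩ := exists_finset_mem_adjoin_of_mul_comm hA h
  have hcard := Finset.card_union_le S T
  refine ⟨S ∪ T, by omega, fun i j ↦ ?_, fun i j ↦ ?_⟩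
  · exact IntermediateField.adjoin.mono k _ _ (by simp) (hA i j)
  · rw [Finset.coe_union, ← IntermediateField.adjoin_adjoin_left]
    exact hB i j

section Krylov

variable {n R : Type*} [Fintype n] [DecidableEq n] [CommRing R]

/-- The Krylov matrix of `A` and the all-ones vector `1`: its columns are the vectors `A ^ l *ᵥ 1`
for `l < Fintype.card n`, the exponents being matched with `n` by `Fintype.equivFin`. -/
noncomputable def krylovMatrix (A : Matrix n n R) : Matrix n n R :=
  .of fun i j ↦ (A ^ (Fintype.equivFin n j : ℕ) *ᵥ 1) i

/-- A polynomial in `A` mapping the all-ones vector to the multiple `(krylovMatrix A).det • y` of a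
prescribed vector `y`. The adjugate replaces the inverse of the Krylov matrix, so that no
denominators occur. -/
noncomputable def krylovInterpolant (A : Matrix n n R) (y : n → R) : Matrix n n R :=
  ∑ j, ((krylovMatrix A).adjugate *ᵥ y) j • A ^ (Fintype.equivFin n j : ℕ)

theorem mul_krylovInterpolant (A : Matrix n n R) (y : n → R) :
    A * krylovInterpolant A y = krylovInterpolant A y * A := by
  simp only [krylovInterpolant, Finset.mul_sum, Finset.sum_mul, mul_smul_comm, smul_mul_assoc,
    ← pow_succ, ← pow_succ']

theorem krylovInterpolant_mulVec_one (A : Matrix n n R) (y : n → R) :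
    krylovInterpolant A y *ᵥ 1 = (krylovMatrix A).det • y := by
  have hsum (c : n → R) :
      (∑ j, c j • A ^ (Fintype.equivFin n j : ℕ)) *ᵥ 1 = krylovMatrix A *ᵥ c := by
    ext i
    simp only [krylovMatrix, Matrix.mulVec, dotProduct, Matrix.sum_apply, Matrix.smul_apply,
      Matrix.of_apply, smul_eq_mul, Finset.sum_mul, Pi.one_apply, mul_one]
    rw [Finset.sum_comm]
    exact Finset.sum_congr rfl fun j _ ↦ Finset.sum_congr rfl fun _ _ ↦ mul_comm _ _
  rw [krylovInterpolant, hsum, Matrix.mulVec_mulVec, Matrix.mul_adjugate, Matrix.smul_mulVec,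
    Matrix.one_mulVec]

theorem krylovMatrix_map {S : Type*} [CommRing S] (f : R →+* S) (A : Matrix n n R) :
    (krylovMatrix A).map f = krylovMatrix (A.map f) := by
  ext i j
  simp [krylovMatrix, ← Matrix.map_pow, Matrix.mulVec, dotProduct]

theorem krylovInterpolant_map {S : Type*} [CommRing S] (f : R →+* S) (A : Matrix n n R)
    (y : n → R) : (krylovInterpolant A y).map f = krylovInterpolant (A.map f) (f ∘ y) := by
  have hcoeff (j : n) : f (((krylovMatrix A).adjugate *ᵥ y) j) =
      ((krylovMatrix (A.map f)).adjugate *ᵥ (f ∘ y)) j := by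
    rw [RingHom.map_mulVec, ← krylovMatrix_map, ← f.mapMatrix_apply, ← f.mapMatrix_apply,
      RingHom.map_adjugate]
  simp only [krylovInterpolant, ← hcoeff]
  ext i j
  simp [Matrix.sum_apply, ← Matrix.map_pow]

theorem krylovMatrix_diagonal (d : n → R) :
    krylovMatrix (Matrix.diagonal d) =
      (Matrix.vandermonde (d ∘ (Fintype.equivFin n).symm)).submatrix
        (Fintype.equivFin n) (Fintype.equivFin n) := by
  ext i j
  simp [krylovMatrix, Matrix.diagonal_pow, Matrix.mulVec_diagonal]

theorem det_krylovMatrix_diagonal_ne_zero [IsDomain R] {d : n → R} (hd : Function.Injective d) :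
    (krylovMatrix (Matrix.diagonal d)).det ≠ 0 := by
  rw [krylovMatrix_diagonal, Matrix.det_submatrix_equiv_self, Matrix.det_vandermonde_ne_zero_iff]
  exact hd.comp (Equiv.injective _)

theorem krylovInterpolant_diagonal_one (d : n → R) :
    krylovInterpolant (Matrix.diagonal d) 1 = (krylovMatrix (Matrix.diagonal d)).det • 1 := by
  obtain ⟨e, he⟩ : ∃ e, krylovInterpolant (Matrix.diagonal d) 1 = Matrix.diagonal e := by
    refine ⟨fun i ↦ krylovInterpolant (Matrix.diagonal d) 1 i i, ?_⟩
    ext i j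
    rcases eq_or_ne i j with rfl | hij
    · simp
    · simp [krylovInterpolant, Matrix.sum_apply, Matrix.diagonal_pow, hij]
  have hone := krylovInterpolant_mulVec_one (Matrix.diagonal d) 1
  have hconst : e = fun _ ↦ (krylovMatrix (Matrix.diagonal d)).det :=
    funext fun i ↦ by simpa [he, Matrix.mulVec_diagonal] using congrFun hone i
  rw [he, hconst, Matrix.smul_one_eq_diagonal]

end Krylov

section GenericMatrix

variable (k n : Type*) [CommRing k]

/-- The generic matrix in the polynomial ring on its entries and on a further vector of
variables. -/
noncomputable def genericMatrix : Matrix n n (MvPolynomial ((n × n) ⊕ n) k) :=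
  .of fun i j ↦ X (.inl (i, j))

/-- The vector of the variables which are not entries of `genericMatrix`. -/
noncomputable def genericVector : n → MvPolynomial ((n × n) ⊕ n) k :=
  fun i ↦ X (.inr i)

variable [DecidableEq n]

/-- The specialization of `genericMatrix` to the diagonal matrix of the variables and of
`genericVector` to the all-ones vector. -/
noncomputable def diagonalSpecialization : MvPolynomial ((n × n) ⊕ n) k →+* MvPolynomial n k :=
  (aeval (R := k) (Sum.elim (fun p ↦ Matrix.diagonal X p.1 p.2) 1)).toRingHom

theorem genericMatrix_map_diagonalSpecialization :
    (genericMatrix k n).map (diagonalSpecialization k n) = Matrix.diagonal X := by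
  ext1 i j
  simp [genericMatrix, diagonalSpecialization]

theorem diagonalSpecialization_comp_genericVector :
    diagonalSpecialization k n ∘ genericVector k n = 1 := by
  ext1 i
  simp [genericVector, diagonalSpecialization]

variable [Fintype n] [IsDomain k]

theorem det_genericMatrix_ne_zero : (genericMatrix k n).det ≠ 0 := by
  refine ne_zero_of_map (f := diagonalSpecialization k n) ?_
  rw [RingHom.map_det, RingHom.mapMatrix_apply, genericMatrix_map_diagonalSpecialization,
    Matrix.det_diagonal]
  exact Finset.prod_ne_zero_iff.mpr fun i _ ↦ X_ne_zero i

theorem det_krylovMatrix_genericMatrix_ne_zero : (krylovMatrix (genericMatrix k n)).det ≠ 0 := by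
  refine ne_zero_of_map (f := diagonalSpecialization k n) ?_
  rw [RingHom.map_det, RingHom.mapMatrix_apply, krylovMatrix_map,
    genericMatrix_map_diagonalSpecialization]
  exact det_krylovMatrix_diagonal_ne_zero X_injective

theorem det_krylovInterpolant_genericMatrix_ne_zero :
    (krylovInterpolant (genericMatrix k n) (genericVector k n)).det ≠ 0 := by
  refine ne_zero_of_map (f := diagonalSpecialization k n) ?_
  rw [RingHom.map_det, RingHom.mapMatrix_apply, krylovInterpolant_map,
    genericMatrix_map_diagonalSpecialization, diagonalSpecialization_comp_genericVector,
    krylovInterpolant_diagonal_one, Matrix.det_smul, Matrix.det_one, mul_one]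
  exact pow_ne_zero _ (det_krylovMatrix_diagonal_ne_zero X_injective)

theorem exists_commuting_matrices_algebraicIndependent (F : Type*) [Field F]
    [Algebra (MvPolynomial ((n × n) ⊕ n) k) F] [IsFractionRing (MvPolynomial ((n × n) ⊕ n) k) F]
    [Algebra k F] [IsScalarTower k (MvPolynomial ((n × n) ⊕ n) k) F] :
    ∃ A B : Matrix n n F, A * B = B * A ∧ A.det ≠ 0 ∧ B.det ≠ 0 ∧
      AlgebraicIndependent k (Sum.elim (fun p : n × n ↦ A p.1 p.2) (B *ᵥ 1)) := by
  let ι := algebraMap (MvPolynomial ((n × n) ⊕ n) k) F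
  have hι : Function.Injective ι := IsFractionRing.injective _ _
  have hdet {M : Matrix n n (MvPolynomial ((n × n) ⊕ n) k)} (hM : M.det ≠ 0) :
      (M.map ι).det ≠ 0 := by
    rw [← ι.mapMatrix_apply, ← RingHom.map_det]
    exact (map_ne_zero_iff ι hι).mpr hM
  let A := (genericMatrix k n).map ι
  let y := ι ∘ genericVector k n
  have hA : (krylovMatrix A).det ≠ 0 :=
    krylovMatrix_map ι (genericMatrix k n) ▸ hdet (det_krylovMatrix_genericMatrix_ne_zero k n)
  have hB : (krylovInterpolant A y).det ≠ 0 :=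
    krylovInterpolant_map ι (genericMatrix k n) (genericVector k n) ▸
      hdet (det_krylovInterpolant_genericMatrix_ne_zero k n)
  let B := (krylovMatrix A).det⁻¹ • krylovInterpolant A y
  have hBone : B *ᵥ 1 = y := by
    rw [Matrix.smul_mulVec, krylovInterpolant_mulVec_one, inv_smul_smul₀ hA]
  refine ⟨A, B, ?_, hdet (det_genericMatrix_ne_zero k n), ?_, ?_⟩
  · rw [mul_smul_comm, smul_mul_assoc, mul_krylovInterpolant]
  · rw [Matrix.det_smul]
    exact mul_ne_zero (pow_ne_zero _ (inv_ne_zero hA)) hB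
  · have hX : Sum.elim (fun p : n × n ↦ A p.1 p.2) (B *ᵥ 1) = ι ∘ X := by
      rw [hBone]
      exact Sum.elim_comp_inl_inr (ι ∘ X)
    rw [hX]
    exact (algebraicIndependent_X _ k).map' (f := IsScalarTower.toAlgHom k _ F) hι

end GenericMatrix

section CommutingVariety

/-- The ideal expressing that the matrices `A` and `B` commute and that `s` and `t` are inverse to
their determinants. -/
def commutingIdeal {n R : Type*} [Fintype n] [DecidableEq n] [CommRing R] (A B : Matrix n n R)
    (s t : R) : Ideal R :=
  Ideal.span ({p | ∃ i j, p = (A * B - B * A) i j} ∪ {s * A.det - 1, t * B.det - 1})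

theorem commutingIdeal_le_ker_iff {n R S : Type*} [Fintype n] [DecidableEq n] [CommRing R]
    [CommRing S] (f : R →+* S) {A B : Matrix n n R} {s t : R} :
    commutingIdeal A B s t ≤ RingHom.ker f ↔
      A.map f * B.map f = B.map f * A.map f ∧
        f s * (A.map f).det = 1 ∧ f t * (B.map f).det = 1 := by
  rw [commutingIdeal, Ideal.span_le, Set.union_subset_iff, Set.pair_subset_iff]
  refine and_congr ?_ (and_congr ?_ ?_)
  · rw [← Matrix.map_mul, ← Matrix.map_mul, ← Matrix.ext_iff]
    constructor
    · intro h i j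
      simpa [sub_eq_zero] using h ⟨i, j, rfl⟩
    · rintro h _ ⟨i, j, rfl⟩
      simpa [sub_eq_zero] using h i j
  · simp [sub_eq_zero, RingHom.map_det]
  · simp [sub_eq_zero, RingHom.map_det]

/-- The matrix of variables `x_{ij}`; the variables `.inr (.inr 0)` and `.inr (.inr 1)` are reserved
for the inverse determinants. -/
noncomputable def variableMatrixX (k n : Type*) [CommRing k] :
    Matrix n n (MvPolynomial ((n × n) ⊕ (n × n) ⊕ Fin 2) k) :=
  fun i j ↦ X (.inl (i, j))

/-- The matrix of variables `y_{ij}`. -/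
noncomputable def variableMatrixY (k n : Type*) [CommRing k] :
    Matrix n n (MvPolynomial ((n × n) ⊕ (n × n) ⊕ Fin 2) k) :=
  fun i j ↦ X (.inr (.inl (i, j)))

variable (k n : Type*) [CommRing k] [Fintype n] [DecidableEq n]

/-- The coordinate ring over `k` of the variety of pairs of commuting invertible matrices. -/
abbrev CommutingGLRing : Type _ :=
  MvPolynomial ((n × n) ⊕ (n × n) ⊕ Fin 2) k ⧸
    commutingIdeal (variableMatrixX k n) (variableMatrixY k n) (X (.inr (.inr 0)))
      (X (.inr (.inr 1)))

namespace CommutingGLRing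

/-- The projection from the polynomial ring onto the coordinate ring. -/
noncomputable abbrev mk : MvPolynomial ((n × n) ⊕ (n × n) ⊕ Fin 2) k →ₐ[k] CommutingGLRing k n :=
  Ideal.Quotient.mkₐ k _

/-- The first matrix of the universal pair of commuting invertible matrices. -/
noncomputable def fst : Matrix n n (CommutingGLRing k n) := (variableMatrixX k n).map (mk k n)

/-- The second matrix of the universal pair of commuting invertible matrices. -/
noncomputable def snd : Matrix n n (CommutingGLRing k n) := (variableMatrixY k n).map (mk k n)

theorem relations :
    fst k n * snd k n = snd k n * fst k n ∧
      mk k n (X (.inr (.inr 0))) * (fst k n).det = 1 ∧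
        mk k n (X (.inr (.inr 1))) * (snd k n).det = 1 :=
  (commutingIdeal_le_ker_iff (mk k n).toRingHom).mp (Ideal.mk_ker (I := commutingIdeal _ _ _ _)).ge

variable {k n}

theorem exists_algHom {S : Type*} [CommRing S] [Algebra k S] {A B : Matrix n n S} {s t : S}
    (h : A * B = B * A) (hs : s * A.det = 1) (ht : t * B.det = 1) :
    ∃ φ : CommutingGLRing k n →ₐ[k] S, (fst k n).map φ = A ∧ (snd k n).map φ = B := by
  let f : MvPolynomial ((n × n) ⊕ (n × n) ⊕ Fin 2) k →ₐ[k] S :=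
    aeval (Sum.elim (fun p ↦ A p.1 p.2) (Sum.elim (fun p ↦ B p.1 p.2) ![s, t]))
  have hA : (variableMatrixX k n).map f = A := by
    ext
    simp [f, variableMatrixX]
  have hB : (variableMatrixY k n).map f = B := by
    ext
    simp [f, variableMatrixY]
  have hker : commutingIdeal (variableMatrixX k n) (variableMatrixY k n) (X (.inr (.inr 0)))
      (X (.inr (.inr 1))) ≤ RingHom.ker (f : _ →+* S) := by
    rw [commutingIdeal_le_ker_iff, RingHom.coe_coe, hA, hB]
    exact ⟨h, by simpa [f] using hs, by simpa [f] using ht⟩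
  exact ⟨Ideal.Quotient.liftₐ _ f hker, hA, hB⟩

theorem mem_of_forall_mem {K : Type*} [Field K] [Algebra k K] {L : Subfield K}
    {φ : CommutingGLRing k n →ₐ[k] K} (hk : ∀ a, algebraMap k K a ∈ L)
    (hfst : ∀ i j, φ (fst k n i j) ∈ L) (hsnd : ∀ i j, φ (snd k n i j) ∈ L)
    (r : CommutingGLRing k n) : φ r ∈ L := by
  have hinv {M : Matrix n n (CommutingGLRing k n)} {s : CommutingGLRing k n}
      (hs : s * M.det = 1) (hM : ∀ i j, φ (M i j) ∈ L) : φ s ∈ L := by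
    have hdet : φ M.det ∈ L := by
      rw [AlgHom.map_det, Matrix.det_apply]
      exact sum_mem fun σ _ ↦ zsmul_mem (prod_mem fun i _ ↦ hM _ _) _
    rw [eq_inv_of_mul_eq_one_left (a := φ s) (b := φ M.det) (by rw [← map_mul, hs, map_one])]
    exact inv_mem hdet
  obtain ⟨-, hs, ht⟩ := relations k n
  obtain ⟨p, rfl⟩ := Ideal.Quotient.mkₐ_surjective k _ r
  induction p using MvPolynomial.induction_on with
  | C a => simpa [← algebraMap_eq] using hk a
  | add p q hp hq => simpa using add_mem hp hq
  | mul_X p v hp =>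
    rw [map_mul, map_mul]
    refine mul_mem hp ?_
    match v with
    | .inl (i, j) => exact hfst i j
    | .inr (.inl (i, j)) => exact hsnd i j
    | .inr (.inr 0) => exact hinv hs hfst
    | .inr (.inr 1) => exact hinv ht hsnd

end CommutingGLRing

end CommutingVariety

section Dimension

open CommutingGLRing

variable (k n : Type*) [Field k] [Fintype n] [DecidableEq n]

theorem ringKrullDim_commutingGLRing_le :
    ringKrullDim (CommutingGLRing k n) ≤
      ((Fintype.card n ^ 2 + Fintype.card n : ℕ) : WithBot ℕ∞) := by
  refine ringKrullDim_le_of_forall_isPrime fun P _ ↦ ?_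
  let Ω := AlgebraicClosure (FractionRing (CommutingGLRing k n ⧸ P))
  -- The field `k` may be finite, so the parameters are counted over an algebraic extension of it.
  let k₀ := algebraicClosure k Ω
  have : IsAlgClosed k₀ := (algebraicClosure.isAlgClosure k Ω).isAlgClosed
  have : Infinite k₀ := IsAlgClosed.instInfinite
  let φ : (CommutingGLRing k n ⧸ P) →ₐ[k] Ω := IsScalarTower.toAlgHom k _ Ω
  have hφ : Function.Injective φ :=
    (FaithfulSMul.algebraMap_injective (FractionRing (CommutingGLRing k n ⧸ P)) Ω).comp
      (IsFractionRing.injective (CommutingGLRing k n ⧸ P) _)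
  let ψ : CommutingGLRing k n →ₐ[k] Ω := φ.comp (Ideal.Quotient.mkₐ k P)
  have hcomm : (fst k n).map ψ * (snd k n).map ψ = (snd k n).map ψ * (fst k n).map ψ := by
    rw [← Matrix.map_mul, ← Matrix.map_mul, (relations k n).1]
  obtain ⟨S, hS, hfst, hsnd⟩ := exists_finset_commuting_matrices_mem_adjoin k₀ hcomm
  refine (ringKrullDim_le_card_of_forall_mem_adjoin (k₀ := k₀) (S := S) hφ fun r ↦ ?_).trans
    (by exact_mod_cast hS)
  obtain ⟨r, rfl⟩ := Ideal.Quotient.mkₐ_surjective k P r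
  exact mem_of_forall_mem (φ := ψ) (L := (IntermediateField.adjoin k₀ (S : Set Ω)).toSubfield)
    (fun a ↦ IntermediateField.algebraMap_mem _ (algebraMap k k₀ a)) hfst hsnd r

theorem le_ringKrullDim_commutingGLRing :
    ((Fintype.card n ^ 2 + Fintype.card n : ℕ) : WithBot ℕ∞) ≤
      ringKrullDim (CommutingGLRing k n) := by
  obtain ⟨A, B, hcomm, hA, hB, hindep⟩ :=
    exists_commuting_matrices_algebraicIndependent k n (FractionRing (MvPolynomial ((n × n) ⊕ n) k))
  obtain ⟨φ, rfl, rfl⟩ :=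
    exists_algHom (k := k) hcomm (inv_mul_cancel₀ hA) (inv_mul_cancel₀ hB)
  let x : (n × n) ⊕ n → CommutingGLRing k n :=
    Sum.elim (fun p ↦ fst k n p.1 p.2) (snd k n *ᵥ 1)
  have hx : φ ∘ x = Sum.elim (fun p ↦ (fst k n).map φ p.1 p.2) ((snd k n).map φ *ᵥ 1) := by
    funext v
    rcases v with p | i
    · rfl
    · simp [x, Matrix.mulVec, dotProduct]
  have hcard := card_le_ringKrullDim φ (hx ▸ hindep)
  rwa [Fintype.card_sum, Fintype.card_prod, ← sq] at hcard

theorem krullDim_commutingVariety_GL_general :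
    ringKrullDim (CommutingGLRing k n) =
      ((Fintype.card n ^ 2 + Fintype.card n : ℕ) : WithBot ℕ∞) :=
  (ringKrullDim_commutingGLRing_le k n).antisymm (le_ringKrullDim_commutingGLRing k n)

end Dimension

/-- The coordinate ring of the commuting variety `C(GL_n)` has Krull dimension `n² + n`. -/
theorem krullDim_commutingVariety_GL (n : ℕ) (hn : 1 ≤ n) :
    ringKrullDim
      ((MvPolynomial ((Fin n × Fin n) ⊕ (Fin n × Fin n) ⊕ Fin 2) ℂ) ⧸
        Ideal.span
          ({p | ∃ i j, p = (genX n * genY n - genY n * genX n) i j} ∪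
            {genS n * (genX n).det - 1, genT n * (genY n).det - 1})) =
    ((n ^ 2 + n : ℕ) : WithBot (WithTop ℕ)) := by
  have h := krullDim_commutingVariety_GL_general ℂ (Fin n)
  rwa [Fintype.card_fin] at h
end

section
/- For every rational number x with 1/2 < x ≤ 1, there exist a natural number n ≥ 2 and natural numbers a, b (possibly zero) with a·n² + b > 0 such that ((a·n² + b) + (a·n + b)) / (2·(a·n² + b)) = x. (This realizes x as the commuting probability p(G) = (dim G + rank G)/(2·dim G) of the reductive group G = GL_n^a × 𝔾_m^b, which has dimension a·n² + b and rank a·n + b.) -/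
/-!
The ratio of rank to dimension is `1 / n` for `GL_n` and `1` for `𝔾_m`; for `GL_n^a × 𝔾_m^b` it is
the average of these two values with weights `a * n ^ 2` and `b`. Hence for a fixed `n ≥ 2` every
rational number in `[1 / n, 1]` is such a ratio, and `2 * x - 1 > 0` lies in this interval once `n`
is large.
-/

theorem add_div_two_mul_eq_iff {K : Type*} [Field K] [NeZero (2 : K)] {d r x : K} (hd : d ≠ 0) :
    (d + r) / (2 * d) = x ↔ r = (2 * x - 1) * d := by
  rw [div_eq_iff (mul_ne_zero two_ne_zero hd)]
  constructor <;> intro h <;> linear_combination h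

theorem exists_dim_eq_and_rank_eq {n p q : ℕ} (hpq : p ≤ q) (hqn : q ≤ p * n) :
    ∃ a b : ℕ, a * n ^ 2 + b = q * (n * (n - 1)) ∧ a * n + b = p * (n * (n - 1)) := by
  obtain _ | m := n
  · exact ⟨0, 0, by simp⟩
  -- With `n = m + 1`, the condition `q * (a * n + b) = p * (a * n ^ 2 + b)` amounts to
  -- `(q - p) * b = a * (n * (p * n - q))`, whence the choice of `a` and `b`.
  refine ⟨q - p, (m + 1) * (p * (m + 1) - q), ?_, ?_⟩ <;>
  · rw [Nat.add_sub_cancel]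
    zify [hpq, hqn]
    ring

theorem exists_rank_eq_mul_dim {n : ℕ} (hn : 2 ≤ n) {y : ℚ} (hny : 1 ≤ y * n) (hy : y ≤ 1) :
    ∃ a b : ℕ, 0 < a * n ^ 2 + b ∧
      ((a * n + b : ℕ) : ℚ) = y * ((a * n ^ 2 + b : ℕ) : ℚ) := by
  have hy₀ : 0 ≤ y := nonneg_of_mul_nonneg_left (zero_le_one.trans hny) (by positivity)
  lift y to ℚ≥0 using hy₀
  norm_cast at hny hy
  have num_le_den : y.num ≤ y.den := by
    have := mul_le_mul_of_nonneg_right hy y.den.cast_nonneg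
    rw [NNRat.mul_den_eq_num, one_mul] at this
    exact_mod_cast this
  have den_le_num_mul : y.den ≤ y.num * n := by
    have := mul_le_mul_of_nonneg_right hny y.den.cast_nonneg
    rw [mul_right_comm, NNRat.mul_den_eq_num, one_mul] at this
    exact_mod_cast this
  obtain ⟨a, b, dim_eq, rank_eq⟩ := exists_dim_eq_and_rank_eq num_le_den den_le_num_mul
  refine ⟨a, b, ?_, ?_⟩
  · rw [dim_eq]
    exact mul_pos y.den_pos (mul_pos (by lia) (by lia))
  · have num_eq : (y.num : ℚ) = y * y.den := by exact_mod_cast y.mul_den_eq_num.symm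
    rw [dim_eq, rank_eq, Nat.cast_mul y.num, Nat.cast_mul y.den, num_eq, mul_assoc]

/-- Every rational number in `(1/2, 1]` is the commuting probability of a reductive group
of the form `GL_n^a × 𝔾_m^b`, of dimension `a·n² + b` and rank `a·n + b`. -/
theorem exists_reductive_commuting_probability (x : ℚ) (hx1 : 1 / 2 < x) (hx2 : x ≤ 1) :
    ∃ n a b : ℕ, 2 ≤ n ∧ 0 < a * n ^ 2 + b ∧
      (((a * n ^ 2 + b : ℕ) : ℚ) + ((a * n + b : ℕ) : ℚ)) /
        (2 * ((a * n ^ 2 + b : ℕ) : ℚ)) = x := by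
  have ratio_pos : 0 < 2 * x - 1 := by linarith
  obtain ⟨n, hn⟩ := exists_nat_ge (max 2 (2 * x - 1)⁻¹)
  have two_le : 2 ≤ n := by exact_mod_cast (le_max_left _ _).trans hn
  have one_le_ratio_mul : 1 ≤ (2 * x - 1) * n :=
    (inv_le_iff_one_le_mul₀' ratio_pos).mp ((le_max_right _ _).trans hn)
  obtain ⟨a, b, dim_pos, rank_eq⟩ :=
    exists_rank_eq_mul_dim two_le one_le_ratio_mul (by linarith)
  exact ⟨n, a, b, two_le, dim_pos,
    (add_div_two_mul_eq_iff (Nat.cast_ne_zero.mpr dim_pos.ne')).mpr rank_eq⟩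
end

section
/- For every rational number x with 1/2 < x ≤ 1, there exist a natural number m ≥ 1 and natural numbers a, b (possibly zero) with a·m(m+1)/2 + b > 0 such that ((a·m(m+1)/2 + b) + (a·m + b)) / (2·(a·m(m+1)/2 + b)) = x. (This realizes x as the commuting probability of the nilpotent group G = U^a × 𝔾_a^b, where U is the group of upper unitriangular (m+1)×(m+1) matrices, of dimension m(m+1)/2 and regular rank m, and 𝔾_a is the additive group, of dimension 1 and regular rank 1.) -/
/-!
The commuting probability `(N + R) / (2 * N)` is an increasing function of the ratio `R / N` of
regular rank to dimension. This ratio is `2 / (m + 1)` for the unitriangular group `U`, hence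
arbitrarily small, and `1` for `𝔾_a`. The ratio of `U^a × 𝔾_a^b` is a weighted mediant of these two
fractions, and every rational number between two fractions is a weighted mediant of them.
-/

theorem lt_mul_succ_div_two {m : ℕ} (hm : 1 < m) : m < m * (m + 1) / 2 := by
  rw [← Nat.succ_le_iff, Nat.le_div_iff_mul_le two_pos, mul_comm]
  exact Nat.mul_le_mul_right (m + 1) hm

theorem cast_div_cast_mul_succ_div_two {K : Type*} [Field K] [CharZero K] {m : ℕ} (hm : m ≠ 0) :
    (m : K) / ((m * (m + 1) / 2 : ℕ) : K) = 2 / (m + 1) := by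
  have hm' : (m : K) ≠ 0 := Nat.cast_ne_zero.mpr hm
  have hm_succ : (m : K) + 1 ≠ 0 := Nat.cast_add_one_ne_zero m
  rw [Nat.cast_div_charZero (Nat.even_mul_succ_self m).two_dvd]
  push_cast
  field_simp

theorem add_div_two_mul_self {K : Type*} [Field K] {N : K} (hN : N ≠ 0) (R : K) :
    (N + R) / (2 * N) = (1 + R / N) / 2 := by
  rw [one_add_div hN, div_div, mul_comm N]

theorem exists_nat_two_div_add_one_lt {K : Type*} [Field K] [LinearOrder K] [IsStrictOrderedRing K]
    [Archimedean K] {y : K} (hy : 0 < y) : ∃ m : ℕ, 2 / ((m : K) + 1) < y := by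
  obtain ⟨m, hm⟩ := exists_nat_one_div_lt (half_pos hy)
  refine ⟨m, ?_⟩
  calc 2 / ((m : K) + 1) = 2 * (1 / ((m : K) + 1)) := by ring
    _ < 2 * (y / 2) := by gcongr
    _ = y := by ring

theorem exists_nat_div_eq {y : ℚ} (hy : 0 ≤ y) : ∃ p q : ℕ, 0 < q ∧ (p : ℚ) / q = y := by
  lift y to ℚ≥0 using hy
  exact ⟨y.num, y.den, y.den_pos, (NNRat.cast_def y).symm⟩

/- Writing `y = p / q`, the equation `q * (a * R + b) = p * (a * N + b)` rearranges to
`(q - p) * b = (p * N - q * R) * a`, whence the weights. -/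
theorem exists_weighted_mediant_one_eq {N R : ℕ} (hRN : R < N) {y : ℚ} (hRy : (R : ℚ) / N ≤ y)
    (hy1 : y ≤ 1) :
    ∃ a b : ℕ, 0 < a * N + b ∧ ((a * R + b : ℕ) : ℚ) / ((a * N + b : ℕ) : ℚ) = y := by
  have hN : (0 : ℚ) < N := by exact_mod_cast Nat.zero_lt_of_lt hRN
  have hgap : (0 : ℚ) < N - R := sub_pos.mpr (by exact_mod_cast hRN)
  obtain ⟨p, q, hq, rfl⟩ := exists_nat_div_eq (hRy.trans' (by positivity))
  have hq' : (0 : ℚ) < q := by exact_mod_cast hq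
  have hpq : p ≤ q := by
    rw [div_le_one hq'] at hy1
    exact_mod_cast hy1
  have hqR : q * R ≤ p * N := by
    rw [div_le_div_iff₀ hN hq', mul_comm] at hRy
    exact_mod_cast hRy
  have hdenom : (((q - p) * N + (p * N - q * R) : ℕ) : ℚ) = q * (N - R) := by
    push_cast [hpq, hqR]
    ring
  have hnumer : (((q - p) * R + (p * N - q * R) : ℕ) : ℚ) = p * (N - R) := by
    push_cast [hpq, hqR]
    ring
  refine ⟨q - p, p * N - q * R, ?_, ?_⟩
  · rw [← Nat.cast_pos (α := ℚ), hdenom]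
    exact mul_pos hq' hgap
  · rw [hnumer, hdenom, mul_div_mul_right _ _ hgap.ne']

/-- Every rational number in `(1/2, 1]` is the commuting probability of a nilpotent group
of the form `U^a × 𝔾_a^b`, where `U` is the group of upper unitriangular
`(m+1) × (m+1)` matrices, of dimension `m(m+1)/2` and regular rank `m`. -/
theorem exists_nilpotent_commuting_probability (x : ℚ) (hx1 : 1 / 2 < x) (hx2 : x ≤ 1) :
    ∃ m a b : ℕ, 1 ≤ m ∧ 0 < a * (m * (m + 1) / 2) + b ∧
      (((a * (m * (m + 1) / 2) + b : ℕ) : ℚ) + ((a * m + b : ℕ) : ℚ)) /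
        (2 * ((a * (m * (m + 1) / 2) + b : ℕ) : ℚ)) = x := by
  have hy1 : 2 * x - 1 ≤ 1 := by linarith
  obtain ⟨m, hmy⟩ := exists_nat_two_div_add_one_lt (show 0 < 2 * x - 1 by linarith)
  have hm : 1 < m := by
    have htwo : (2 : ℚ) < m + 1 := (div_lt_one (by positivity)).mp (hmy.trans_le hy1)
    exact_mod_cast (by linarith : (1 : ℚ) < m)
  have hratio := cast_div_cast_mul_succ_div_two (K := ℚ) (Nat.ne_zero_of_lt hm)
  obtain ⟨a, b, hpos, hab⟩ :=
    exists_weighted_mediant_one_eq (lt_mul_succ_div_two hm) (hratio.trans_le hmy.le) hy1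
  refine ⟨m, a, b, hm.le, hpos, ?_⟩
  rw [add_div_two_mul_self (Nat.cast_ne_zero.mpr hpos.ne'), hab]
  ring
end

section
/- Let U be the group of upper unitriangular 3×3 matrices over ℂ. Let g = [[1, a, b],[0, 1, c],[0, 0, 1]] and h = [[1, a', b'],[0, 1, c'],[0, 0, 1]] be non-central elements of U, i.e. (a, c) ≠ (0, 0) and (a', c') ≠ (0, 0). Then the centralizers Z_U(g) and Z_U(h) are conjugate in U (there exists u ∈ U with u·Z_U(g)·u⁻¹ = Z_U(h)) if and only if a·c' = c·a'. -/
/-- `m` is an upper unitriangular `3 × 3` matrix. -/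
def IsUnitriangular (m : Matrix (Fin 3) (Fin 3) ℂ) : Prop :=
  m 0 0 = 1 ∧ m 1 1 = 1 ∧ m 2 2 = 1 ∧ m 1 0 = 0 ∧ m 2 0 = 0 ∧ m 2 1 = 0

/-- The centraliser, in the group `U` of upper unitriangular `3 × 3` matrices,
of a matrix `g`. -/
def ZU (g : Matrix (Fin 3) (Fin 3) ℂ) : Set (Matrix (Fin 3) (Fin 3) ℂ) :=
  {u | IsUnitriangular u ∧ u * g = g * u}

/-!
Two unitriangular `3 × 3` matrices commute exactly when their superdiagonals `(a, c)` and `(a', c')`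
are proportional, so a non-central centralizer consists of the matrices whose superdiagonal lies on
the line spanned by `(a, c)`. Superdiagonals add under multiplication, hence are invariant under
conjugation. Conjugate centralizers of non-central elements are therefore equal, and they are
determined by that line.
-/

lemma fin_castSucc_covBy_succ {n : ℕ} (i : Fin n) : i.castSucc ⋖ i.succ :=
  Fin.covBy_iff.mpr (Order.covBy_add_one (i : ℕ))

/-- Upper unitriangular square matrices of arbitrary size and with arbitrary entries: ones on the
diagonal, zeros below it. -/
structure IsUpperUnitriangular {n R : Type*} [LT n] [Zero R] [One R] (A : Matrix n n R) : Prop where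
  isUpperTriangular : A.IsUpperTriangular
  apply_self (i : n) : A i i = 1

namespace IsUpperUnitriangular

variable {n R : Type*}

lemma one [Preorder n] [DecidableEq n] [Zero R] [One R] :
    IsUpperUnitriangular (1 : Matrix n n R) :=
  ⟨Matrix.blockTriangular_one, Matrix.one_apply_eq⟩

section Mul

variable [LinearOrder n] [Fintype n] [NonAssocSemiring R] {A B : Matrix n n R}

lemma mul (hA : IsUpperUnitriangular A) (hB : IsUpperUnitriangular B) :
    IsUpperUnitriangular (A * B) where
  isUpperTriangular := hA.isUpperTriangular.mul hB.isUpperTriangular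
  apply_self i := by
    rw [Matrix.mul_apply, Fintype.sum_eq_single i, hA.apply_self, hB.apply_self, one_mul]
    intro k hki
    rcases hki.lt_or_gt with hlt | hgt
    · rw [hA.isUpperTriangular hlt, zero_mul]
    · rw [hB.isUpperTriangular hgt, mul_zero]

lemma mul_apply_of_covBy (hA : IsUpperUnitriangular A) (hB : IsUpperUnitriangular B)
    {i j : n} (hij : i ⋖ j) : (A * B) i j = A i j + B i j := by
  rw [Matrix.mul_apply, Fintype.sum_eq_add i j hij.ne, hA.apply_self, hB.apply_self, one_mul,
    mul_one, add_comm]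
  rintro k ⟨hki, hkj⟩
  rcases hki.lt_or_gt with hlt | hgt
  · rw [hA.isUpperTriangular hlt, zero_mul]
  · have hjk : j < k := (hij.ge_of_gt hgt).lt_of_ne hkj.symm
    rw [hB.isUpperTriangular hjk, mul_zero]

end Mul

lemma apply_eq_of_semiconjBy [LinearOrder n] [Fintype n] [NonAssocRing R] {U A B : Matrix n n R}
    (hU : IsUpperUnitriangular U) (hA : IsUpperUnitriangular A) (hB : IsUpperUnitriangular B)
    (hUAB : SemiconjBy U A B) {i j : n} (hij : i ⋖ j) : A i j = B i j := by
  have hentry : (U * A) i j = (B * U) i j := by rw [hUAB.eq]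
  rw [hU.mul_apply_of_covBy hA hij, hB.mul_apply_of_covBy hU hij, add_comm] at hentry
  exact add_right_cancel hentry

lemma det_eq_one [LinearOrder n] [Fintype n] [CommRing R] {A : Matrix n n R}
    (hA : IsUpperUnitriangular A) : A.det = 1 := by
  simp only [Matrix.det_of_isUpperTriangular hA.isUpperTriangular, hA.apply_self,
    Finset.prod_const_one]

lemma semiconjBy_conj [LinearOrder n] [Fintype n] [CommRing R] {U : Matrix n n R}
    (hU : IsUpperUnitriangular U) (A : Matrix n n R) : SemiconjBy U A (U * A * U⁻¹) :=
  (Matrix.nonsing_inv_mul_cancel_right U (U * A) (by simp [hU.det_eq_one])).symm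

section FinThree

lemma fin_three_iff [Zero R] [One R] {A : Matrix (Fin 3) (Fin 3) R} :
    IsUpperUnitriangular A ↔
      A 0 0 = 1 ∧ A 1 1 = 1 ∧ A 2 2 = 1 ∧ A 1 0 = 0 ∧ A 2 0 = 0 ∧ A 2 1 = 0 := by
  constructor
  · rintro ⟨hlower, hdiag⟩
    exact ⟨hdiag 0, hdiag 1, hdiag 2, hlower (by decide), hlower (by decide), hlower (by decide)⟩
  · rintro ⟨h00, h11, h22, h10, h20, h21⟩
    constructor
    · intro i j hji
      fin_cases i <;> fin_cases j <;> first | assumption | exact absurd hji (by decide)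
    · intro i
      fin_cases i <;> assumption

lemma ext_fin_three [Zero R] [One R] {A B : Matrix (Fin 3) (Fin 3) R}
    (hA : IsUpperUnitriangular A) (hB : IsUpperUnitriangular B)
    (h01 : A 0 1 = B 0 1) (h12 : A 1 2 = B 1 2) (h02 : A 0 2 = B 0 2) : A = B := by
  ext i j
  rcases lt_trichotomy j i with hlt | rfl | hgt
  · rw [hA.isUpperTriangular hlt, hB.isUpperTriangular hlt]
  · rw [hA.apply_self, hB.apply_self]
  · fin_cases i <;> fin_cases j <;> first | assumption | exact absurd hgt (by decide)

lemma mul_apply_zero_two [NonAssocSemiring R] {A B : Matrix (Fin 3) (Fin 3) R}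
    (hA : IsUpperUnitriangular A) (hB : IsUpperUnitriangular B) :
    (A * B) 0 2 = B 0 2 + A 0 1 * B 1 2 + A 0 2 := by
  rw [Matrix.mul_apply, Fin.sum_univ_three, hA.apply_self, hB.apply_self, one_mul, mul_one]

lemma commute_iff_fin_three [NonAssocRing R] {A B : Matrix (Fin 3) (Fin 3) R}
    (hA : IsUpperUnitriangular A) (hB : IsUpperUnitriangular B) :
    Commute A B ↔ A 0 1 * B 1 2 = B 0 1 * A 1 2 := by
  have hcorner : (A * B) 0 2 = (B * A) 0 2 ↔ A 0 1 * B 1 2 = B 0 1 * A 1 2 := by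
    rw [hA.mul_apply_zero_two hB, hB.mul_apply_zero_two hA, add_right_comm,
      add_right_comm (A 0 2), add_comm (A 0 2), add_right_inj]
  rw [← hcorner]
  refine ⟨fun hAB => by rw [hAB.eq], (hA.mul hB).ext_fin_three (hB.mul hA) ?_ ?_⟩
  · have h01 : (0 : Fin 3) ⋖ 1 := fin_castSucc_covBy_succ (0 : Fin 2)
    rw [hA.mul_apply_of_covBy hB h01, hB.mul_apply_of_covBy hA h01, add_comm]
  · have h12 : (1 : Fin 3) ⋖ 2 := fin_castSucc_covBy_succ (1 : Fin 2)
    rw [hA.mul_apply_of_covBy hB h12, hB.mul_apply_of_covBy hA h12, add_comm]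

end FinThree

end IsUpperUnitriangular

lemma mul_eq_mul_trans_of_not_both_zero {M : Type*} [CommMonoidWithZero M] [IsCancelMulZero M]
    {x y a c a' c' : M} (hac : ¬(a = 0 ∧ c = 0)) (hxy : x * c = a * y) (h : a * c' = a' * c) :
    x * c' = a' * y := by
  by_cases ha : a = 0
  · have hc : c ≠ 0 := fun hc => hac ⟨ha, hc⟩
    refine mul_right_cancel₀ hc ?_
    calc x * c' * c = x * c * c' := mul_right_comm ..
      _ = a * c' * y := by rw [hxy, mul_right_comm]
      _ = a' * y * c := by rw [h, mul_right_comm]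
  · refine mul_left_cancel₀ ha ?_
    calc a * (x * c') = x * (a * c') := mul_left_comm ..
      _ = a' * (x * c) := by rw [h, mul_left_comm]
      _ = a * (a' * y) := by rw [hxy, mul_left_comm]

/-- The centralizer of `g` in the group of upper unitriangular matrices, as a set of matrices of
arbitrary size over an arbitrary semiring; `ZU` is the case of complex `3 × 3` matrices. -/
def unitriangularCentralizer {n R : Type*} [LT n] [Fintype n] [NonAssocSemiring R]
    (g : Matrix n n R) : Set (Matrix n n R) :=
  {u | IsUpperUnitriangular u ∧ Commute u g}

section FinThree

variable {R : Type*} [CommRing R] {g h : Matrix (Fin 3) (Fin 3) R}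

lemma superdiagonal_proportional_of_conj_mem_unitriangularCentralizer
    {u : Matrix (Fin 3) (Fin 3) R} (hu : IsUpperUnitriangular u) (hg : IsUpperUnitriangular g)
    (hh : IsUpperUnitriangular h) (hmem : u * g * u⁻¹ ∈ unitriangularCentralizer h) :
    g 0 1 * h 1 2 = h 0 1 * g 1 2 := by
  obtain ⟨hconj, hcomm⟩ := hmem
  have hsuper {i j : Fin 3} (hij : i ⋖ j) : g i j = (u * g * u⁻¹) i j :=
    hu.apply_eq_of_semiconjBy hg hconj (hu.semiconjBy_conj g) hij
  have h01 : g 0 1 = (u * g * u⁻¹) 0 1 := hsuper (fin_castSucc_covBy_succ (0 : Fin 2))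
  have h12 : g 1 2 = (u * g * u⁻¹) 1 2 := hsuper (fin_castSucc_covBy_succ (1 : Fin 2))
  rw [h01, h12]
  exact (hconj.commute_iff_fin_three hh).mp hcomm

lemma unitriangularCentralizer_subset_of_superdiagonal_proportional [IsCancelMulZero R]
    (hg : IsUpperUnitriangular g) (hh : IsUpperUnitriangular h)
    (hg0 : ¬(g 0 1 = 0 ∧ g 1 2 = 0)) (hgh : g 0 1 * h 1 2 = h 0 1 * g 1 2) :
    unitriangularCentralizer g ⊆ unitriangularCentralizer h := by
  rintro u ⟨hu, hug⟩
  exact ⟨hu, (hu.commute_iff_fin_three hh).mpr <|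
    mul_eq_mul_trans_of_not_both_zero hg0 ((hu.commute_iff_fin_three hg).mp hug) hgh⟩

theorem unitriangular_centralizers_conjugate_iff_general [IsCancelMulZero R]
    (hg : IsUpperUnitriangular g) (hh : IsUpperUnitriangular h)
    (hg0 : ¬(g 0 1 = 0 ∧ g 1 2 = 0)) (hh0 : ¬(h 0 1 = 0 ∧ h 1 2 = 0)) :
    (∃ u : Matrix (Fin 3) (Fin 3) R, IsUpperUnitriangular u ∧
        (fun m => u * m * u⁻¹) '' unitriangularCentralizer g = unitriangularCentralizer h) ↔
      g 0 1 * h 1 2 = h 0 1 * g 1 2 := by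
  constructor
  · rintro ⟨u, hu, himage⟩
    have hmem : u * g * u⁻¹ ∈ unitriangularCentralizer h :=
      himage ▸ Set.mem_image_of_mem (fun m => u * m * u⁻¹) ⟨hg, Commute.refl g⟩
    exact superdiagonal_proportional_of_conj_mem_unitriangularCentralizer hu hg hh hmem
  · intro hgh
    have heq : unitriangularCentralizer g = unitriangularCentralizer h :=
      (unitriangularCentralizer_subset_of_superdiagonal_proportional hg hh hg0 hgh).antisymm
        (unitriangularCentralizer_subset_of_superdiagonal_proportional hh hg hh0 hgh.symm)
    refine ⟨1, .one, ?_⟩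
    simp only [inv_one, one_mul, mul_one, Set.image_id', heq]

end FinThree

lemma isUnitriangular_iff_isUpperUnitriangular {m : Matrix (Fin 3) (Fin 3) ℂ} :
    IsUnitriangular m ↔ IsUpperUnitriangular m :=
  IsUpperUnitriangular.fin_three_iff.symm

lemma ZU_eq_unitriangularCentralizer (g : Matrix (Fin 3) (Fin 3) ℂ) :
    ZU g = unitriangularCentralizer g :=
  Set.ext fun _ => and_congr_left' isUnitriangular_iff_isUpperUnitriangular

lemma isUpperUnitriangular_fin_three {R : Type*} [Zero R] [One R] (a b c : R) :
    IsUpperUnitriangular !![1, a, b; 0, 1, c; 0, 0, 1] :=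
  IsUpperUnitriangular.fin_three_iff.mpr ⟨rfl, rfl, rfl, rfl, rfl, rfl⟩

/-- For non-central elements `g = [[1,a,b],[0,1,c],[0,0,1]]` and
`h = [[1,a',b'],[0,1,c'],[0,0,1]]` of the unitriangular group `U`, the centralisers
`Z_U(g)` and `Z_U(h)` are conjugate in `U` if and only if `a·c' = c·a'`. -/
theorem unitriangular_centralizers_conjugate_iff (a b c a' b' c' : ℂ)
    (hg : ¬(a = 0 ∧ c = 0)) (hh : ¬(a' = 0 ∧ c' = 0)) :
    (∃ u : Matrix (Fin 3) (Fin 3) ℂ, IsUnitriangular u ∧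
        (fun m => u * m * u⁻¹) '' ZU !![1, a, b; 0, 1, c; 0, 0, 1] =
          ZU !![1, a', b'; 0, 1, c'; 0, 0, 1]) ↔
      a * c' = c * a' := by
  simp only [isUnitriangular_iff_isUpperUnitriangular, ZU_eq_unitriangularCentralizer,
    mul_comm c a']
  exact unitriangular_centralizers_conjugate_iff_general
    (isUpperUnitriangular_fin_three a b c) (isUpperUnitriangular_fin_three a' b' c') hg hh
end
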